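/- arXiv:2102.04038 — 3 statements merged into one kernel-verified Lean document; each statement's English description precedes it below -/
import Mathlib

section
/- For all R, θ, L, Q > 0 there exists M_1 = M_1(R, θ, L, Q) > 0 with the following property. Let (c_k)_{k≥1} be a real sequence with 1 + θ ≤ c_k ≤ R for all k, set C_k = c_1 ⋯ c_k, let B ⊆ ℕ, and suppose there exist finite index sets I_k ⊆ ℕ^k (k = 1, 2, …), a function a defined on ∪_{k≥1} I_k taking values in B, and a function m : ∪_{k≥1} I_k → ℕ satisfying (C1)–(C4) and a((1)) ≥ M_1. Then dimH {A ∈ [a((1))^{1/c_1}, (a((1))+1)^{1/c_1}) : ⌊A^{C_k}⌋ ∈ B for all k ≥ 1} ≥ 1/(1 + R/(a((1)) log a((1)))). -/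
open Real Set

/-! Write `X = a((1))`. Along a branch of the tree the intervals with end points
`a(j) ^ (1 / C_k)` and `(a(j) + 1) ^ (1 / C_k)` are nested, and their common point `x` satisfies
`⌊x ^ C_k⌋ = a(j)` for all `k` unless it is one of the countably many right end points. Keep as
many children at every node as the poorest node of its level has, and choose the branch by
independent uniform digits. The labels of level `k` are at least `X ^ (C_k / c_1)`, so up to an
arbitrarily small loss in the exponent there are `X ^ ((C_{k+1} - C_k) / c_1)` choices for the next
digit. If two branches have separated by level `k`, the numbers `x ^ C_k` differ by at least `1`,
so the points are at distance at least about `(X + 1) ^ (-C_k / c_1)`. Covering a ball at the two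
levels whose scales surround its radius, and using `C_{k+1} ≤ R C_k`, the mass distribution
principle gives dimension at least `log X / (log X + R log (1 + 1 / X))`, and
`log (1 + 1 / X) ≤ 1 / X`. -/

open Filter MeasureTheory ProbabilityTheory Topology
open scoped ENNReal NNReal

/-! ### Dimension of the image of a space of digit sequences -/

/-- The **mass distribution principle**. -/
theorem le_dimH_of_measure_closedBall_le {X : Type*} [MetricSpace X] [MeasurableSpace X]
    [BorelSpace X] {μ : Measure X} {t : Set X} {s : ℝ≥0} {C : ℝ}
    (hμ : ∀ᶠ r in 𝓝[>] (0 : ℝ), ∀ x, μ (Metric.closedBall x r) ≤ ENNReal.ofReal (C * r ^ (s : ℝ)))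
    (ht : μ t ≠ 0) : (s : ℝ≥0∞) ≤ dimH t := by
  obtain ⟨r₀, hr₀, hball⟩ := mem_nhdsGT_iff_exists_Ioo_subset.1 hμ
  replace hr₀ : 0 < r₀ := hr₀
  set K : ℝ≥0∞ := ENNReal.ofReal (max C 1)
  have hK₀ : K ≠ 0 := by simp [K]
  have hK : K ≠ ∞ := ENNReal.ofReal_ne_top
  suffices hle : K⁻¹ • μ ≤ μH[s] by
    refine le_dimH_of_hausdorffMeasure_ne_zero fun h ↦ ht ?_
    simpa [h, hK] using hle t
  refine Measure.le_hausdorffMeasure s _ (ENNReal.ofReal (r₀ / 2)) (by simpa) fun U hU ↦ ?_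
  rw [Measure.smul_apply, smul_eq_mul, ENNReal.inv_mul_le_iff hK₀ hK]
  obtain rfl | ⟨x, hx⟩ := U.eq_empty_or_nonempty
  · simp
  have hU_top : Metric.ediam U ≠ ∞ := ne_top_of_le_ne_top ENNReal.ofReal_ne_top hU
  have hU_lt : Metric.diam U < r₀ := by
    have := ENNReal.toReal_le_of_le_ofReal (by positivity) hU
    exact this.trans_lt (half_lt_self hr₀)
  rw [← ENNReal.ofReal_toReal hU_top, ENNReal.ofReal_rpow_of_nonneg ENNReal.toReal_nonneg
    s.coe_nonneg, ← ENNReal.ofReal_mul (by positivity)]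
  have hlim : Tendsto (fun δ : ℝ ↦ ENNReal.ofReal (max C 1 * δ ^ (s : ℝ)))
      (𝓝[>] Metric.diam U) (𝓝 (ENNReal.ofReal (max C 1 * Metric.diam U ^ (s : ℝ)))) :=
    ((ENNReal.continuous_ofReal.comp
      ((Real.continuous_rpow_const s.coe_nonneg).const_mul (max C 1))).tendsto _).mono_left
      nhdsWithin_le_nhds
  refine ge_of_tendsto hlim ?_
  filter_upwards [Ioo_mem_nhdsGT hU_lt] with δ hδ
  have hδ₀ : 0 < δ := Metric.diam_nonneg.trans_lt hδ.1
  have hsub : U ⊆ Metric.closedBall x δ := fun y hy ↦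
    (Metric.dist_le_diam_of_mem' hU_top hy hx).trans hδ.1.le
  calc μ U ≤ μ (Metric.closedBall x δ) := measure_mono hsub
    _ ≤ ENNReal.ofReal (C * δ ^ (s : ℝ)) := hball ⟨hδ₀, hδ.2⟩ x
    _ ≤ ENNReal.ofReal (max C 1 * δ ^ (s : ℝ)) := by gcongr; exact le_max_left C 1

lemma exists_succ_le_lt {ε : ℕ → ℝ} (hε : Tendsto ε atTop (𝓝 0)) {k₀ : ℕ} {t : ℝ} (ht : 0 < t)
    (htk : t < ε k₀) : ∃ k ≥ k₀, ε (k + 1) ≤ t ∧ t < ε k := by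
  by_contra! h
  have hlt : ∀ k ≥ k₀, t < ε k := fun k hk ↦ by
    induction k, hk using Nat.le_induction with
    | base => exact htk
    | succ k hk ih => exact lt_of_not_ge fun hle ↦ (h k hk hle).not_gt ih
  obtain ⟨k, hk, hk₀⟩ := ((hε.eventually_lt_const ht).and (eventually_ge_atTop k₀)).exists
  exact hk.not_gt (hlt k hk₀)

lemma exists_pos_mul_exp_le_prod {f n : ℕ → ℝ} (hn : ∀ k, 0 < n k)
    (hf : ∀ᶠ k in atTop, exp (f (k + 1) - f k) ≤ n k) :
    ∃ A > 0, ∀ᶠ k in atTop, A * exp (f k) ≤ ∏ i ∈ Finset.range k, n i := by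
  obtain ⟨k₀, hk₀⟩ := eventually_atTop.1 hf
  have hpos : 0 < ∏ i ∈ Finset.range k₀, n i := Finset.prod_pos fun i _ ↦ hn i
  refine ⟨(∏ i ∈ Finset.range k₀, n i) * exp (-f k₀), by positivity,
    eventually_atTop.2 ⟨k₀, fun k hk ↦ ?_⟩⟩
  induction k, hk using Nat.le_induction with
  | base => rw [mul_assoc, ← exp_add, neg_add_cancel, exp_zero, mul_one]
  | succ k hk ih =>
    rw [Finset.prod_range_succ, ← add_sub_cancel (f k) (f (k + 1)), exp_add, ← mul_assoc]
    exact mul_le_mul ih (hk₀ k hk) (exp_nonneg _) (Finset.prod_nonneg fun i _ ↦ (hn i).le)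

lemma min_one_le_rpow {y s : ℝ} (hy : 0 ≤ y) (hs₀ : 0 ≤ s) (hs₁ : s ≤ 1) : min 1 y ≤ y ^ s := by
  obtain h | h := le_total 1 y
  · exact (min_le_left _ _).trans (Real.one_le_rpow h hs₀)
  · exact (min_le_right _ _).trans (Real.self_le_rpow_of_le_one hy h hs₁)

lemma measurable_of_dependsOn {ι β : Type*} {α : ι → Type*} [∀ i, Countable (α i)]
    [∀ i, MeasurableSpace (α i)] [∀ i, MeasurableSingletonClass (α i)] [MeasurableSpace β]
    [Nonempty β] {f : (∀ i, α i) → β} {s : Finset ι} (hf : DependsOn f s) : Measurable f := by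
  obtain ⟨g, rfl⟩ := dependsOn_iff_exists_comp.1 hf
  exact (measurable_of_countable g).comp (Finset.measurable_restrict s)

section UniformDigits

/-- The law of a sequence of independent digits, the `k`-th one uniform on `α k`. -/
noncomputable def uniformDigits (α : ℕ → Type*) [∀ k, MeasurableSpace (α k)] :
    Measure (∀ k, α k) :=
  Measure.infinitePi fun k ↦ uniformOn (univ : Set (α k))

instance (α : ℕ → Type*) [∀ k, Finite (α k)] [∀ k, Nonempty (α k)] [∀ k, MeasurableSpace (α k)]
    [∀ k, MeasurableSingletonClass (α k)] : IsProbabilityMeasure (uniformDigits α) :=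
  inferInstanceAs (IsProbabilityMeasure (Measure.infinitePi _))

variable {α : ℕ → Type*} [∀ k, Fintype (α k)] [∀ k, Nonempty (α k)] [∀ k, MeasurableSpace (α k)]
  [∀ k, MeasurableSingletonClass (α k)]

lemma uniformDigits_real_cylinder (ω : ∀ k, α k) (k : ℕ) :
    (uniformDigits α).real (PiNat.cylinder ω k) =
      (∏ i ∈ Finset.range k, (Fintype.card (α i) : ℝ))⁻¹ := by
  have hpi : PiNat.cylinder ω k = Set.pi (Finset.range k : Set ℕ) fun i ↦ {ω i} := by
    simp [PiNat.cylinder_eq_pi]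
  rw [hpi, Measure.real, uniformDigits,
    Measure.infinitePi_pi _ fun _ _ ↦ measurableSet_singleton _]
  simp [uniformOn_univ, ENNReal.toReal_prod, Finset.prod_inv_distrib]

variable {Y : Type*} [PseudoMetricSpace Y]

lemma uniformDigits_real_preimage_le_of_dist_lt {φ : (∀ k, α k) → Y} {ε : ℝ} {k : ℕ}
    (hφ : ∀ ω ω', ω' ∉ PiNat.cylinder ω k → ε ≤ dist (φ ω) (φ ω')) {S : Set Y}
    (hS : ∀ y ∈ S, ∀ z ∈ S, dist y z < ε) :
    (uniformDigits α).real (φ ⁻¹' S) ≤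
      (∏ i ∈ Finset.range k, (Fintype.card (α i) : ℝ))⁻¹ := by
  obtain h | ⟨ω, hω⟩ := (φ ⁻¹' S).eq_empty_or_nonempty
  · rw [h, measureReal_empty]
    positivity
  rw [← uniformDigits_real_cylinder ω k]
  refine measureReal_mono fun ω' hω' ↦ ?_
  by_contra hne
  exact (hφ ω ω' hne).not_gt (hS _ hω _ hω')

lemma uniformDigits_real_preimage_Icc_le {φ : (∀ k, α k) → ℝ} {ε : ℝ} (hε : 0 < ε) {k : ℕ}
    (hφ : ∀ ω ω', ω' ∉ PiNat.cylinder ω k → ε ≤ dist (φ ω) (φ ω')) (x y : ℝ) :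
    (uniformDigits α).real (φ ⁻¹' Icc x y) ≤
      (⌊(y - x) / ε⌋₊ + 1) * (∏ i ∈ Finset.range k, (Fintype.card (α i) : ℝ))⁻¹ := by
  set N := ⌊(y - x) / ε⌋₊
  let piece (n : ℕ) : Set ℝ := Ico (x + n * ε) (x + n * ε + ε)
  have hcover : Icc x y ⊆ ⋃ n ∈ Finset.range (N + 1), piece n := by
    intro z hz
    have hfloor : ⌊(z - x) / ε⌋₊ ≤ N := Nat.floor_le_floor (by gcongr; exact hz.2)
    have hz₀ : 0 ≤ (z - x) / ε := div_nonneg (sub_nonneg.2 hz.1) hε.le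
    have h₁ := (le_div_iff₀ hε).1 (Nat.floor_le hz₀)
    have h₂ := (div_lt_iff₀ hε).1 (Nat.lt_floor_add_one ((z - x) / ε))
    simp only [mem_iUnion, Finset.mem_range]
    exact ⟨_, Nat.lt_succ_of_le hfloor, by linarith, by linarith⟩
  have hpiece (n : ℕ) : ∀ y ∈ piece n, ∀ z ∈ piece n, dist y z < ε := fun y hy z hz ↦
    abs_sub_lt_iff.2 ⟨by linarith [hy.2, hz.1], by linarith [hy.1, hz.2]⟩
  calc (uniformDigits α).real (φ ⁻¹' Icc x y)
      ≤ (uniformDigits α).real (⋃ n ∈ Finset.range (N + 1), φ ⁻¹' piece n) :=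
        measureReal_mono ((preimage_mono hcover).trans_eq (by simp only [preimage_iUnion]))
          (measure_ne_top _ _)
    _ ≤ ∑ n ∈ Finset.range (N + 1), (uniformDigits α).real (φ ⁻¹' piece n) :=
        measureReal_biUnion_finset_le _ _
    _ ≤ ∑ _ ∈ Finset.range (N + 1), (∏ i ∈ Finset.range k, (Fintype.card (α i) : ℝ))⁻¹ :=
        Finset.sum_le_sum fun n _ ↦ uniformDigits_real_preimage_le_of_dist_lt hφ (hpiece n)
    _ = (N + 1) * (∏ i ∈ Finset.range k, (Fintype.card (α i) : ℝ))⁻¹ := by simp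

lemma uniformDigits_real_preimage_closedBall_le {φ : (∀ k, α k) → ℝ} {ε : ℕ → ℝ} {s : ℝ}
    (hs₀ : 0 ≤ s) (hs₁ : s ≤ 1) {k : ℕ} (hε : 0 < ε (k + 1))
    (hφ : ∀ i ∈ Icc k (k + 1), ∀ ω ω', ω' ∉ PiNat.cylinder ω i → ε i ≤ dist (φ ω) (φ ω'))
    (hcard : 1 ≤ (∏ i ∈ Finset.range k, (Fintype.card (α i) : ℝ)) *
      (Fintype.card (α k) * ε (k + 1)) ^ s)
    {r : ℝ} (hr : ε (k + 1) ≤ 2 * r) (hr' : 2 * r < ε k) (x : ℝ) :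
    (uniformDigits α).real (φ ⁻¹' Metric.closedBall x r) ≤ 4 ^ s * r ^ s := by
  have hε' : 0 < ε k := by linarith
  set N : ℝ := ∏ i ∈ Finset.range k, (Fintype.card (α i) : ℝ)
  set n : ℝ := (Fintype.card (α k) : ℝ)
  have hN : 0 < N := Finset.prod_pos fun i _ ↦ by positivity
  have hn : 0 < n := by positivity
  have hr₀ : 0 < r := by linarith
  have hlen : x + r - (x - r) = 2 * r := by ring
  rw [Real.closedBall_eq_Icc]
  have hcoarse : (uniformDigits α).real (φ ⁻¹' Icc (x - r) (x + r)) ≤ N⁻¹ := by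
    have h := uniformDigits_real_preimage_Icc_le hε' (hφ k (by simp)) (x - r) (x + r)
    rwa [hlen, Nat.floor_eq_zero.2 ((div_lt_one hε').2 hr'), Nat.cast_zero, zero_add,
      one_mul] at h
  have hfine : (uniformDigits α).real (φ ⁻¹' Icc (x - r) (x + r)) ≤
      N⁻¹ * (4 * r / (n * ε (k + 1))) := by
    have h := uniformDigits_real_preimage_Icc_le hε (hφ (k + 1) (by simp)) (x - r) (x + r)
    have hfloor : (⌊2 * r / ε (k + 1)⌋₊ : ℝ) + 1 ≤ 4 * r / ε (k + 1) := by
      have := Nat.floor_le (show 0 ≤ 2 * r / ε (k + 1) by positivity)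
      have := (one_le_div hε).2 hr
      linarith [show 4 * r / ε (k + 1) = 2 * r / ε (k + 1) + 2 * r / ε (k + 1) by ring]
    rw [hlen, Finset.prod_range_succ] at h
    calc _ ≤ _ := h
      _ ≤ 4 * r / ε (k + 1) * (N * n)⁻¹ := by gcongr
      _ = N⁻¹ * (4 * r / (n * ε (k + 1))) := by field_simp
  -- `min_one_le_rpow` interpolates between the estimates at the two levels.
  calc _ ≤ N⁻¹ * min 1 (4 * r / (n * ε (k + 1))) := by
        rw [mul_min_of_nonneg _ _ (by positivity), mul_one]
        exact le_min hcoarse hfine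
    _ ≤ N⁻¹ * (4 * r / (n * ε (k + 1))) ^ s := by
        gcongr
        exact min_one_le_rpow (by positivity) hs₀ hs₁
    _ = 4 ^ s * r ^ s / (N * (n * ε (k + 1)) ^ s) := by
        rw [Real.div_rpow (by positivity) (by positivity), Real.mul_rpow (by norm_num) hr₀.le]
        field_simp
    _ ≤ 4 ^ s * r ^ s := div_le_self (by positivity) hcard

theorem le_dimH_range_of_separated {φ : (∀ k, α k) → ℝ} (hφ : Measurable φ) {ε : ℕ → ℝ}
    (hε : ∀ k, 0 < ε k) (hε₀ : Tendsto ε atTop (𝓝 0))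
    (hsep : ∀ᶠ k in atTop, ∀ ω ω', ω' ∉ PiNat.cylinder ω k → ε k ≤ dist (φ ω) (φ ω'))
    {s : ℝ≥0} (hs : s ≤ 1)
    (hcard : ∀ᶠ k in atTop, 1 ≤ (∏ i ∈ Finset.range k, (Fintype.card (α i) : ℝ)) *
      (Fintype.card (α k) * ε (k + 1)) ^ (s : ℝ)) :
    (s : ℝ≥0∞) ≤ dimH (range φ) := by
  obtain ⟨k₀, hk₀⟩ := eventually_atTop.1 (hsep.and hcard)
  have hmeas : (uniformDigits α).map φ (range φ) ≠ 0 := by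
    refine ne_of_gt ?_
    calc 0 < uniformDigits α (φ ⁻¹' range φ) := by simp
      _ ≤ _ := Measure.le_map_apply hφ.aemeasurable _
  refine le_dimH_of_measure_closedBall_le (C := 4 ^ (s : ℝ)) ?_ hmeas
  filter_upwards [Ioo_mem_nhdsGT (half_pos (hε k₀))] with r hr x
  obtain ⟨k, hk, hle, hlt⟩ :=
    exists_succ_le_lt hε₀ (t := 2 * r) (by linarith [hr.1]) (by linarith [hr.2])
  rw [Measure.map_apply hφ Metric.isClosed_closedBall.measurableSet, ← ofReal_measureReal]
  exact ENNReal.ofReal_le_ofReal <| uniformDigits_real_preimage_closedBall_le s.coe_nonneg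
    (by exact_mod_cast hs) (hε _) (fun i hi ↦ (hk₀ i (hk.trans hi.1)).1) (hk₀ k hk).2 hle hlt x

theorem le_dimH_range_of_exp_separated {φ : (∀ k, α k) → ℝ} (hφ : Measurable φ)
    {D : ℕ → ℝ} (hD : Tendsto D atTop atTop) {R β ν : ℝ} (hR : 0 ≤ R)
    (hDR : ∀ k, D (k + 1) ≤ R * D k) (hβ : 0 < β) (hβν : β ≤ ν)
    (hcard : ∀ᶠ k in atTop, exp (β * (D (k + 1) - D k)) ≤ Fintype.card (α k))
    (hsep : ∀ᶠ k in atTop, ∀ ω ω', ω' ∉ PiNat.cylinder ω k →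
      exp (-(ν * D k)) ≤ dist (φ ω) (φ ω'))
    {s : ℝ≥0} (hs : s * (β + R * (ν - β)) < β) :
    (s : ℝ≥0∞) ≤ dimH (range φ) := by
  have hν : 0 < ν := hβ.trans_le hβν
  have hRν : 0 ≤ R * (ν - β) := mul_nonneg hR (sub_nonneg.2 hβν)
  have hs₁ : s ≤ 1 := by
    by_contra! h
    have : (1 : ℝ) < s := by exact_mod_cast h
    nlinarith
  refine le_dimH_range_of_separated hφ (fun k ↦ exp_pos (-(ν * D k)))
    (tendsto_exp_neg_atTop_nhds_zero.comp (hD.const_mul_atTop hν)) hsep hs₁ ?_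
  obtain ⟨A, hA, hprod⟩ := exists_pos_mul_exp_le_prod (f := fun k ↦ β * D k)
    (n := fun k ↦ (Fintype.card (α k) : ℝ)) (fun k ↦ by positivity) (by simpa only [← mul_sub])
  have hlarge : ∀ᶠ k in atTop, 1 ≤ A * exp ((β - s * (β + R * (ν - β))) * D k) :=
    ((tendsto_exp_atTop.comp (hD.const_mul_atTop (sub_pos.2 hs))).const_mul_atTop
      hA).eventually_ge_atTop 1
  filter_upwards [hcard, hprod, hlarge] with k hcardk hprodk hlargek
  have hscale : exp (-((β + R * (ν - β)) * D k)) ≤ Fintype.card (α k) * exp (-(ν * D (k + 1))) :=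
    calc exp (-((β + R * (ν - β)) * D k))
        ≤ exp (β * (D (k + 1) - D k) + -(ν * D (k + 1))) := by
          gcongr
          nlinarith [mul_le_mul_of_nonneg_left (hDR k) (sub_nonneg.2 hβν)]
      _ ≤ _ := by rw [exp_add]; gcongr
  calc 1 ≤ A * exp ((β - s * (β + R * (ν - β))) * D k) := hlargek
    _ = A * exp (β * D k) * exp (-((β + R * (ν - β)) * D k)) ^ (s : ℝ) := by
      rw [← exp_mul, mul_assoc, ← exp_add]
      ring_nf
    _ ≤ _ := by gcongr

theorem ofReal_div_le_dimH_range_of_exp_separated {φ : (∀ k, α k) → ℝ} (hφ : Measurable φ)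
    {D : ℕ → ℝ} (hD : Tendsto D atTop atTop) {R l u : ℝ} (hR : 0 ≤ R)
    (hDR : ∀ k, D (k + 1) ≤ R * D k) (hl : 0 < l) (hlu : l ≤ u)
    (hcard : ∀ β ∈ Ioo 0 l, ∀ᶠ k in atTop, exp (β * (D (k + 1) - D k)) ≤ Fintype.card (α k))
    (hsep : ∀ ν > u, ∀ᶠ k in atTop, ∀ ω ω', ω' ∉ PiNat.cylinder ω k →
      exp (-(ν * D k)) ≤ dist (φ ω) (φ ω')) :
    ENNReal.ofReal (l / (l + R * (u - l))) ≤ dimH (range φ) := by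
  refine ENNReal.le_of_forall_nnreal_lt fun s hs ↦ ?_
  have hden : 0 < l + R * (u - l) := by
    linarith [mul_nonneg hR (sub_nonneg.2 hlu)]
  have hsl : s * (l + R * (u - l)) < l := by
    rw [← lt_div_iff₀ hden]
    exact (ENNReal.lt_ofReal_iff_toReal_lt ENNReal.coe_ne_top).1 hs
  have hcont : Tendsto (fun δ : ℝ ↦ l - δ - s * (l - δ + R * (u + δ - (l - δ)))) (𝓝[>] 0)
      (𝓝 (l - s * (l + R * (u - l)))) :=
    (Continuous.tendsto' (by fun_prop) 0 _ (by simp)).mono_left nhdsWithin_le_nhds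
  obtain ⟨δ, hδs, hδ, hδl⟩ := ((hcont.eventually_const_lt (sub_pos.2 hsl)).and
    (Ioo_mem_nhdsGT hl)).exists
  exact le_dimH_range_of_exp_separated hφ hD hR hDR (sub_pos.2 hδl) (by linarith)
    (hcard _ ⟨sub_pos.2 hδl, sub_lt_self l hδ⟩) (hsep _ (by linarith)) (sub_pos.1 hδs)

end UniformDigits

/-! ### Real powers -/

lemma one_le_mul_rpow_mul_sub {x y p : ℝ} (hx : 0 ≤ x) (hy : 0 ≤ y) (hp : 1 ≤ p)
    (h : x ^ p + 1 ≤ y ^ p) : 1 ≤ p * y ^ p * (y - x) := by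
  have hy₁ : 1 ≤ y := by
    by_contra! hlt
    linarith [rpow_lt_one hy hlt (zero_lt_one.trans_le hp), rpow_nonneg hx p]
  have : 0 < y := zero_lt_one.trans_le hy₁
  have hxy : x ≤ y := (rpow_le_rpow_iff hx hy (zero_lt_one.trans_le hp)).1 (by linarith)
  have hbernoulli : 1 + p * (x / y - 1) ≤ (x / y) ^ p := by
    simpa using one_add_mul_self_le_rpow_one_add (s := x / y - 1)
      (by linarith [div_nonneg hx hy]) hp
  calc 1 ≤ y ^ p - x ^ p := by linarith
    _ = y ^ p * (1 - (x / y) ^ p) := by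
        rw [div_rpow hx hy, mul_one_sub, mul_div_cancel₀ _ (by positivity)]
    _ ≤ y ^ p * (p * (y - x) / y) := by
        gcongr
        linarith [show p * (y - x) / y = - (p * (x / y - 1)) by field_simp; ring]
    _ ≤ y ^ p * (p * (y - x)) := by
        gcongr
        exact div_le_self (mul_nonneg (by linarith) (sub_nonneg.2 hxy)) hy₁
    _ = p * y ^ p * (y - x) := by ring

lemma eventually_mul_rpow_le_exp {y ν : ℝ} (hy : 0 < y) (hν : log y < ν) :
    ∀ᶠ t in atTop, t * y ^ t ≤ exp (ν * t) := by
  filter_upwards [(isLittleO_pow_exp_pos_mul_atTop 1 (sub_pos.2 hν)).bound one_pos,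
    eventually_ge_atTop 0] with t ht ht₀
  have ht' : t ≤ exp ((ν - log y) * t) := by simpa [abs_of_nonneg ht₀] using ht
  calc t * y ^ t ≤ exp ((ν - log y) * t) * exp (log y * t) := by
        rw [rpow_def_of_pos hy]
        gcongr
    _ = exp (ν * t) := by rw [← exp_add]; ring_nf

lemma eventually_rpow_mul_sub_one_le {R θ L Q β : ℝ} (hR : 0 < R) (hθ : 0 < θ) (hQ : 0 < Q)
    (hβ : β < 1) :
    ∀ᶠ x in atTop, ∀ c ∈ Icc (1 + θ) R,
      x ^ (β * (c - 1)) ≤ Q * x ^ (c - 1) * (c * log x) ^ (-L) := by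
  have hlo := isLittleO_log_rpow_rpow_atTop |L| (mul_pos (sub_pos.2 hβ) hθ)
  have hbound : ∀ᶠ x : ℝ in atTop, (R * log x) ^ |L| ≤ Q * x ^ ((1 - β) * θ) := by
    filter_upwards [hlo.bound (c := Q / R ^ |L|) (by positivity), eventually_ge_atTop 1]
      with x hx hx₁
    have hlogx := log_nonneg hx₁
    rw [norm_of_nonneg (by positivity), norm_of_nonneg (by positivity)] at hx
    calc (R * log x) ^ |L| = R ^ |L| * log x ^ |L| := mul_rpow hR.le hlogx
      _ ≤ R ^ |L| * (Q / R ^ |L| * x ^ ((1 - β) * θ)) := by gcongr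
      _ = Q * x ^ ((1 - β) * θ) := by field_simp
  filter_upwards [hbound, tendsto_log_atTop.eventually_ge_atTop 1,
    eventually_ge_atTop 1] with x hx hlogx hx₁ c hc
  have hx₀ : 0 < x := zero_lt_one.trans_le hx₁
  have hc1 : 1 ≤ c * log x := one_le_mul_of_one_le_of_one_le (by linarith [hc.1]) hlogx
  have hc₀ : 0 < c * log x := by linarith
  have hpow : (c * log x) ^ L ≤ Q * x ^ ((1 - β) * (c - 1)) :=
    calc (c * log x) ^ L ≤ (c * log x) ^ |L| := rpow_le_rpow_of_exponent_le hc1 (le_abs_self L)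
      _ ≤ (R * log x) ^ |L| := by gcongr; exact hc.2
      _ ≤ Q * x ^ ((1 - β) * θ) := hx
      _ ≤ Q * x ^ ((1 - β) * (c - 1)) := by
        gcongr
        linarith [hc.1]
  calc x ^ (β * (c - 1)) = x ^ (β * (c - 1)) * (c * log x) ^ L * (c * log x) ^ (-L) := by
        rw [mul_assoc, ← rpow_add hc₀, add_neg_cancel, rpow_zero, mul_one]
    _ ≤ x ^ (β * (c - 1)) * (Q * x ^ ((1 - β) * (c - 1))) * (c * log x) ^ (-L) := by gcongr
    _ = Q * x ^ (c - 1) * (c * log x) ^ (-L) := by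
        rw [mul_left_comm, ← rpow_add hx₀]
        ring_nf

/-! ### Mills sequences -/

/-- A sequence of integers along which the intervals `[b k ^ (1 / E k), (b k + 1) ^ (1 / E k)]`
are nested. -/
structure IsMillsSequence (E : ℕ → ℝ) (b : ℕ → ℕ) : Prop where
  rpow_le (k : ℕ) : (b k : ℝ) ^ (E (k + 1) / E k) ≤ b (k + 1)
  add_one_le (k : ℕ) : (b (k + 1) : ℝ) + 1 ≤ ((b k : ℝ) + 1) ^ (E (k + 1) / E k)

/-- The left end of `⋂ k, [b k ^ (1 / E k), (b k + 1) ^ (1 / E k)]` when these intervals are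
nested. -/
noncomputable def millsConstant (E : ℕ → ℝ) (b : ℕ → ℕ) : ℝ := ⨆ k, (b k : ℝ) ^ (E k)⁻¹

namespace IsMillsSequence

variable {E : ℕ → ℝ} {b b' : ℕ → ℕ}

lemma monotone_rpow_inv (h : IsMillsSequence E b) (hE : ∀ k, 0 < E k) :
    Monotone fun k ↦ (b k : ℝ) ^ (E k)⁻¹ := by
  refine monotone_nat_of_le_succ fun k ↦ ?_
  have := hE k
  rw [le_rpow_inv_iff_of_pos (by positivity) (by positivity) (hE _), ← rpow_mul (by positivity),
    inv_mul_eq_div]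
  exact h.rpow_le k

lemma antitone_add_one_rpow_inv (h : IsMillsSequence E b) (hE : ∀ k, 0 < E k) :
    Antitone fun k ↦ ((b k : ℝ) + 1) ^ (E k)⁻¹ := by
  refine antitone_nat_of_succ_le fun k ↦ ?_
  rw [rpow_inv_le_iff_of_pos (by positivity) (by positivity) (hE _), ← rpow_mul (by positivity),
    inv_mul_eq_div]
  exact h.add_one_le k

lemma millsConstant_mem_Icc (h : IsMillsSequence E b) (hE : ∀ k, 0 < E k) (k : ℕ) :
    millsConstant E b ∈ Icc ((b k : ℝ) ^ (E k)⁻¹) (((b k : ℝ) + 1) ^ (E k)⁻¹) := by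
  refine mem_iInter.1 ((h.monotone_rpow_inv hE).ciSup_mem_iInter_Icc_of_antitone
    (h.antitone_add_one_rpow_inv hE) fun i ↦ ?_) k
  exact rpow_le_rpow (by positivity) (by linarith) (inv_nonneg.2 (hE i).le)

lemma millsConstant_nonneg (h : IsMillsSequence E b) (hE : ∀ k, 0 < E k) :
    0 ≤ millsConstant E b :=
  (rpow_nonneg (Nat.cast_nonneg _) _).trans (h.millsConstant_mem_Icc hE 0).1

lemma millsConstant_rpow_mem_Icc (h : IsMillsSequence E b) (hE : ∀ k, 0 < E k) (k : ℕ) :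
    millsConstant E b ^ E k ∈ Icc (b k : ℝ) (b k + 1) :=
  ⟨(rpow_inv_le_iff_of_pos (by positivity) (h.millsConstant_nonneg hE) (hE k)).1
    (h.millsConstant_mem_Icc hE k).1,
   (le_rpow_inv_iff_of_pos (h.millsConstant_nonneg hE) (by positivity) (hE k)).1
    (h.millsConstant_mem_Icc hE k).2⟩

lemma floor_millsConstant_rpow (h : IsMillsSequence E b) (hE : ∀ k, 0 < E k) {k : ℕ}
    (hk : millsConstant E b ^ E k ≠ b k + 1) : ⌊millsConstant E b ^ E k⌋₊ = b k :=
  have ⟨hle, hge⟩ := h.millsConstant_rpow_mem_Icc hE k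
  (Nat.floor_eq_iff (rpow_nonneg (h.millsConstant_nonneg hE) _)).2 ⟨hle, hge.lt_of_ne hk⟩

lemma one_le_mul_rpow_mul_dist (h : IsMillsSequence E b) (h' : IsMillsSequence E b')
    (hE : ∀ k, 0 < E k) {k : ℕ} (hk : 1 ≤ E k) (hsep : 2 ≤ |(b k : ℝ) - b' k|) {y : ℝ}
    (hy : millsConstant E b ≤ y) (hy' : millsConstant E b' ≤ y) :
    1 ≤ E k * y ^ E k * dist (millsConstant E b) (millsConstant E b') := by
  wlog hlt : (b' k : ℝ) < b k generalizing b b'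
  · rw [dist_comm]
    rw [abs_sub_comm] at hsep
    refine this h' h hsep hy' hy ((not_lt.1 hlt).lt_of_ne fun heq ↦ ?_)
    norm_num [heq] at hsep
  have hx := h.millsConstant_nonneg hE
  have hx' := h'.millsConstant_nonneg hE
  rw [abs_of_pos (sub_pos.2 hlt)] at hsep
  rw [Real.dist_eq]
  calc 1 ≤ E k * millsConstant E b ^ E k * (millsConstant E b - millsConstant E b') :=
        one_le_mul_rpow_mul_sub hx' hx hk (by
          linarith [(h.millsConstant_rpow_mem_Icc hE k).1,
            (h'.millsConstant_rpow_mem_Icc hE k).2])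
    _ ≤ E k * millsConstant E b ^ E k * |millsConstant E b - millsConstant E b'| := by
        gcongr
        exact le_abs_self _
    _ ≤ E k * y ^ E k * |millsConstant E b - millsConstant E b'| := by gcongr

lemma millsConstant_mem_Ico (h : IsMillsSequence E b) (hE : ∀ k, 0 < E k) {k : ℕ}
    (hk : millsConstant E b ^ E k ≠ b k + 1) :
    millsConstant E b ∈ Ico ((b k : ℝ) ^ (E k)⁻¹) (((b k : ℝ) + 1) ^ (E k)⁻¹) := by
  refine ⟨(h.millsConstant_mem_Icc hE k).1, (h.millsConstant_mem_Icc hE k).2.lt_of_ne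
    fun heq ↦ hk ?_⟩
  rw [heq, rpow_inv_rpow (by positivity) (hE k).ne']

end IsMillsSequence

/-! ### Trees of Mills sequences -/

/-- The node at level `k` on the branch obtained from the root `[1]` by choosing at level `i` the
child number `d i`. -/
def branch (d : ℕ → ℕ) (k : ℕ) : List ℕ := 1 :: (List.range k).map d

lemma branch_zero (d : ℕ → ℕ) : branch d 0 = [1] := rfl

lemma branch_succ (d : ℕ → ℕ) (k : ℕ) : branch d (k + 1) = branch d k ++ [d k] := by
  simp [branch, List.range_succ]

lemma branch_eq_iff {d d' : ℕ → ℕ} {k : ℕ} :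
    branch d k = branch d' k ↔ ∀ i < k, d i = d' i := by
  simp [branch]

/-- The exponent `C_{k + 1} = c_1 ⋯ c_{k + 1}` of level `k + 1`, indexed from `0`. -/
noncomputable def cumProd (c : ℕ → ℝ) (k : ℕ) : ℝ := ∏ i ∈ Finset.Icc 1 (k + 1), c i

section CumProd

variable {c : ℕ → ℝ}

lemma cumProd_zero : cumProd c 0 = c 1 := by simp [cumProd]

lemma cumProd_succ (k : ℕ) : cumProd c (k + 1) = cumProd c k * c (k + 2) :=
  Finset.prod_Icc_succ_top (by lia) c

lemma cumProd_pos (hc : ∀ k ≥ 1, 0 < c k) (k : ℕ) : 0 < cumProd c k :=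
  Finset.prod_pos fun i hi ↦ hc i (Finset.mem_Icc.1 hi).1

lemma cumProd_succ_div (hc : ∀ k ≥ 1, 0 < c k) (k : ℕ) :
    cumProd c (k + 1) / cumProd c k = c (k + 2) := by
  rw [cumProd_succ, mul_div_cancel_left₀ _ (cumProd_pos hc k).ne']

lemma tendsto_cumProd {ρ : ℝ} (hρ : 1 < ρ) (hc : ∀ k ≥ 1, ρ ≤ c k) :
    Tendsto (cumProd c) atTop atTop := by
  have hpos := cumProd_pos fun k hk ↦ (zero_lt_one.trans hρ).trans_le (hc k hk)
  refine tendsto_atTop_of_geom_le (hpos 0) hρ fun k ↦ ?_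
  rw [cumProd_succ, mul_comm]
  exact mul_le_mul_of_nonneg_left (hc _ (by lia)) (hpos k).le

end CumProd

/-- The conditions (C1), (C2) and (C3): a tree with levels `I k` and root `[1]`, in which a node
`j` has the children `j ++ [1], …, j ++ [m j]`, with labels `a j` that grow from level `k - 1` to
level `k` like a power `c k` and are never equal or consecutive on the same level. -/
structure IsMillsTree (c : ℕ → ℝ) (I : ℕ → Finset (List ℕ)) (a m : List ℕ → ℕ) : Prop where
  level_one : I 1 = {[1]}
  mem_level : ∀ k, 2 ≤ k → ∀ l : List ℕ,
    l ∈ I k ↔ ∃ j ∈ I (k - 1), ∃ i : ℕ, 1 ≤ i ∧ i ≤ m j ∧ l = j ++ [i]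
  label_children : ∀ k, 2 ≤ k → ∀ j ∈ I (k - 1),
    ((a j : ℝ) ^ c k ≤ (a (j ++ [1]) : ℝ)) ∧
    (∀ i : ℕ, 1 ≤ i → i < m j → a (j ++ [i]) < a (j ++ [i + 1])) ∧
    ((a (j ++ [m j]) : ℝ) ≤ ((a j : ℝ) + 1) ^ c k - 1)
  two_le_abs_sub : ∀ k, 2 ≤ k → ∀ j ∈ I (k - 1), ∀ j' ∈ I (k - 1), j ≠ j' →
    2 ≤ |(a j : ℝ) - (a j' : ℝ)|

/-- The least number of children of a node of level `k + 1`. -/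
noncomputable def minChildCount (I : ℕ → Finset (List ℕ)) (m : List ℕ → ℕ) (k : ℕ) : ℕ :=
  sInf (m '' I (k + 1))

namespace IsMillsTree

variable {c : ℕ → ℝ} {I : ℕ → Finset (List ℕ)} {a m : List ℕ → ℕ}

lemma mem_level_succ (h : IsMillsTree c I a m) {k : ℕ} {l : List ℕ} :
    l ∈ I (k + 2) ↔ ∃ j ∈ I (k + 1), ∃ i : ℕ, 1 ≤ i ∧ i ≤ m j ∧ l = j ++ [i] :=
  h.mem_level (k + 2) (by lia) l

section Child

variable {k i : ℕ} {j : List ℕ}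

lemma monotoneOn_label (h : IsMillsTree c I a m) (hj : j ∈ I (k + 1)) :
    MonotoneOn (fun i ↦ a (j ++ [i])) (Icc 1 (m j)) :=
  monotoneOn_of_le_add_one ordConnected_Icc fun i _ hi hi' ↦
    ((h.label_children (k + 2) (by lia) j hj).2.1 i hi.1 hi'.2).le

lemma rpow_le (h : IsMillsTree c I a m) (hj : j ∈ I (k + 1)) (hi : i ∈ Icc 1 (m j)) :
    (a j : ℝ) ^ c (k + 2) ≤ a (j ++ [i]) :=
  (h.label_children (k + 2) (by lia) j hj).1.trans <| Nat.cast_le.2 <|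
    h.monotoneOn_label hj (left_mem_Icc.2 (hi.1.trans hi.2)) hi hi.1

lemma add_one_le (h : IsMillsTree c I a m) (hj : j ∈ I (k + 1)) (hi : i ∈ Icc 1 (m j)) :
    (a (j ++ [i]) : ℝ) + 1 ≤ ((a j : ℝ) + 1) ^ c (k + 2) :=
  le_sub_iff_add_le.1 <| (Nat.cast_le.2 <|
    h.monotoneOn_label hj hi (right_mem_Icc.2 (hi.1.trans hi.2)) hi.2).trans
      (h.label_children (k + 2) (by lia) j hj).2.2

end Child

section Growth

lemma rpow_cumProd_le (h : IsMillsTree c I a m) (hc : ∀ k ≥ 1, 0 < c k) {k : ℕ} {j : List ℕ}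
    (hj : j ∈ I (k + 1)) : ((a [1] : ℝ) ^ (c 1)⁻¹) ^ cumProd c k ≤ a j := by
  induction k generalizing j with
  | zero =>
    rw [zero_add, h.level_one, Finset.mem_singleton] at hj
    rw [hj, cumProd_zero, rpow_inv_rpow (by positivity) (hc 1 le_rfl).ne']
  | succ k ih =>
    obtain ⟨j, hjk, i, hi, hi', rfl⟩ := h.mem_level_succ.1 hj
    have hck := hc (k + 2) (by lia)
    calc ((a [1] : ℝ) ^ (c 1)⁻¹) ^ cumProd c (k + 1)
        = (((a [1] : ℝ) ^ (c 1)⁻¹) ^ cumProd c k) ^ c (k + 2) := by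
          rw [cumProd_succ, rpow_mul (by positivity)]
      _ ≤ (a j : ℝ) ^ c (k + 2) := by gcongr; exact ih hjk
      _ ≤ a (j ++ [i]) := h.rpow_le hjk ⟨hi, hi'⟩

lemma one_lt_rpow_inv (hc : ∀ k ≥ 1, 0 < c k) (ha : 1 < a [1]) : 1 < (a [1] : ℝ) ^ (c 1)⁻¹ :=
  one_lt_rpow (by exact_mod_cast ha) (inv_pos.2 (hc 1 le_rfl))

lemma one_lt_label (h : IsMillsTree c I a m) (hc : ∀ k ≥ 1, 0 < c k) (ha : 1 < a [1]) {k : ℕ}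
    {j : List ℕ} (hj : j ∈ I (k + 1)) : (1 : ℝ) < a j :=
  (one_lt_rpow (one_lt_rpow_inv hc ha) (cumProd_pos hc k)).trans_le (h.rpow_cumProd_le hc hj)

lemma eventually_label (h : IsMillsTree c I a m) (hc : ∀ k ≥ 1, 0 < c k)
    (hlim : Tendsto (cumProd c) atTop atTop) (ha : 1 < a [1]) {p : ℝ → Prop}
    (hp : ∀ᶠ x in atTop, p x) : ∀ᶠ k in atTop, ∀ j ∈ I k, p (a j) := by
  obtain ⟨x₀, hx₀⟩ := eventually_atTop.1 hp
  rw [← map_add_atTop_eq_nat 1, eventually_map]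
  filter_upwards [((tendsto_rpow_atTop_of_base_gt_one _ (one_lt_rpow_inv hc ha)).comp
    hlim).eventually_ge_atTop x₀] with k hk j hj
  exact hx₀ _ (hk.trans (h.rpow_cumProd_le hc hj))

lemma childCount_pos (h : IsMillsTree c I a m) (hc : ∀ k ≥ 1, 0 < c k) (ha : 1 < a [1])
    {Q L : ℝ} (hQ : 0 < Q)
    (hm : ∀ k, 2 ≤ k → ∀ j ∈ I (k - 1),
      Q * (a j : ℝ) ^ (c k - 1) * (c k * log (a j)) ^ (-L) ≤ (m j : ℝ))
    (k : ℕ) (hk : 1 ≤ k) (j : List ℕ) (hj : j ∈ I k) : 0 < m j := by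
  obtain ⟨k, rfl⟩ := Nat.exists_eq_add_of_le' hk
  have hlabel := h.one_lt_label hc ha hj
  have hlog := log_pos hlabel
  have hck := hc (k + 2) (by lia)
  exact Nat.cast_pos.1 <| lt_of_lt_of_le (by positivity) (hm (k + 2) (by lia) j hj)

lemma eventually_rpow_le_childCount (h : IsMillsTree c I a m) {R θ : ℝ} (hθ : 0 < θ)
    (hc : ∀ k ≥ 1, 1 + θ ≤ c k ∧ c k ≤ R) (ha : 1 < a [1]) {Q L : ℝ} (hQ : 0 < Q)
    (hm : ∀ k, 2 ≤ k → ∀ j ∈ I (k - 1),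
      Q * (a j : ℝ) ^ (c k - 1) * (c k * log (a j)) ^ (-L) ≤ (m j : ℝ))
    {β : ℝ} (hβ : β < 1) :
    ∀ᶠ k in atTop, ∀ j ∈ I k, (a j : ℝ) ^ (β * (c (k + 1) - 1)) ≤ m j := by
  have hR : 0 < R := by linarith [hc 1 le_rfl]
  have hlim := tendsto_cumProd (lt_add_of_pos_right 1 hθ) fun k hk ↦ (hc k hk).1
  filter_upwards [h.eventually_label (fun k hk ↦ by linarith [hc k hk]) hlim ha
    (eventually_rpow_mul_sub_one_le (L := L) hR hθ hQ hβ), eventually_ge_atTop 1] with k hk hk₁ j hj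
  exact (hk j hj _ (hc _ (by lia))).trans (hm (k + 1) (by lia) j hj)

end Growth

lemma branch_mem (h : IsMillsTree c I a m) {d : ℕ → ℕ}
    (hd : ∀ k, d k ∈ Icc 1 (minChildCount I m k)) (k : ℕ) : branch d k ∈ I (k + 1) := by
  induction k with
  | zero => simp [h.level_one, branch_zero]
  | succ k ih =>
    exact h.mem_level_succ.2 ⟨_, ih, d k, (hd k).1,
      (hd k).2.trans (Nat.sInf_le (mem_image_of_mem m ih)), branch_succ d k⟩

lemma isMillsSequence_branch (h : IsMillsTree c I a m) (hc : ∀ k ≥ 1, 0 < c k) {d : ℕ → ℕ}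
    (hd : ∀ k, d k ∈ Icc 1 (minChildCount I m k)) :
    IsMillsSequence (cumProd c) fun k ↦ a (branch d k) := by
  have hd' (k : ℕ) : d k ∈ Icc 1 (m (branch d k)) :=
    ⟨(hd k).1, (hd k).2.trans (Nat.sInf_le (mem_image_of_mem m (h.branch_mem hd k)))⟩
  constructor <;> intro k <;> rw [branch_succ, cumProd_succ_div hc]
  · exact h.rpow_le (h.branch_mem hd k) (hd' k)
  · exact h.add_one_le (h.branch_mem hd k) (hd' k)

section MinChildCount

lemma level_nonempty (h : IsMillsTree c I a m) (hm : ∀ k ≥ 1, ∀ j ∈ I k, 0 < m j) (k : ℕ) :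
    (I (k + 1)).Nonempty := by
  induction k with
  | zero => simp [h.level_one]
  | succ k ih =>
    obtain ⟨j, hj⟩ := ih
    exact ⟨_, h.mem_level_succ.2 ⟨j, hj, 1, le_rfl, hm _ (by lia) j hj, rfl⟩⟩

lemma exists_childCount_eq (h : IsMillsTree c I a m) (hm : ∀ k ≥ 1, ∀ j ∈ I k, 0 < m j)
    (k : ℕ) : ∃ j ∈ I (k + 1), m j = minChildCount I m k :=
  Nat.sInf_mem ((Finset.coe_nonempty.2 (h.level_nonempty hm k)).image m)

lemma minChildCount_pos (h : IsMillsTree c I a m) (hm : ∀ k ≥ 1, ∀ j ∈ I k, 0 < m j) (k : ℕ) :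
    0 < minChildCount I m k := by
  obtain ⟨j, hj, hmj⟩ := h.exists_childCount_eq hm k
  exact hmj ▸ hm _ (by lia) j hj

lemma eventually_exp_le_minChildCount (h : IsMillsTree c I a m)
    (hc : ∀ k ≥ 1, 1 ≤ c k) (ha : 1 < a [1]) (hm₀ : ∀ k ≥ 1, ∀ j ∈ I k, 0 < m j)
    (hm : ∀ β ∈ Ioo (0 : ℝ) 1, ∀ᶠ k in atTop, ∀ j ∈ I k,
      (a j : ℝ) ^ (β * (c (k + 1) - 1)) ≤ m j)
    {β : ℝ} (hβ : β ∈ Ioo 0 (log (a [1]) / c 1)) :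
    ∀ᶠ k in atTop, exp (β * (cumProd c (k + 1) - cumProd c k)) ≤ minChildCount I m k := by
  set l := log (a [1]) / c 1
  have hl : 0 < l := hβ.1.trans hβ.2
  have hβl : 0 < β / l := div_pos hβ.1 hl
  filter_upwards [(tendsto_add_atTop_nat 1).eventually
    (hm (β / l) ⟨hβl, (div_lt_one hl).2 hβ.2⟩)] with k hk
  obtain ⟨j, hj, hmj⟩ := h.exists_childCount_eq hm₀ k
  have hck : 0 ≤ c (k + 2) - 1 := sub_nonneg.2 (hc _ (by lia))
  have hlabel : exp (l * cumProd c k) ≤ a j := by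
    have ha₀ : (0 : ℝ) < a [1] := by positivity
    refine le_of_eq_of_le ?_ (h.rpow_cumProd_le (fun k hk ↦ zero_lt_one.trans_le (hc k hk)) hj)
    rw [← rpow_mul ha₀.le, rpow_def_of_pos ha₀, ← mul_assoc, ← div_eq_mul_inv]
  calc exp (β * (cumProd c (k + 1) - cumProd c k))
      = exp (l * cumProd c k) ^ (β / l * (c (k + 2) - 1)) := by
        rw [← exp_mul, cumProd_succ]
        congr 1
        field_simp
    _ ≤ (a j : ℝ) ^ (β / l * (c (k + 2) - 1)) := by gcongr
    _ ≤ minChildCount I m k := hmj ▸ hk j hj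

end MinChildCount

section Coding

variable (c I a m) in
/-- The real number attached to the branch with digits `ω`. Restricting to `minChildCount I m k`
children at level `k + 1` makes the digits independent of each other. -/
noncomputable def coding (ω : ∀ k, Fin (minChildCount I m k)) : ℝ :=
  millsConstant (cumProd c) fun k ↦ a (branch (fun i ↦ ω i + 1) k)

lemma measurable_coding : Measurable (coding c I a m) := by
  refine Measurable.iSup fun k ↦ measurable_of_dependsOn (s := Finset.range k) fun ω ω' hω ↦ ?_
  have hbranch : branch (fun i ↦ (ω i : ℕ) + 1) k = branch (fun i ↦ (ω' i : ℕ) + 1) k :=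
    branch_eq_iff.2 fun i hi ↦ by rw [hω i (by simpa using hi)]
  simp only [hbranch]

variable (ω ω' : ∀ k, Fin (minChildCount I m k))

lemma branch_coding_mem (h : IsMillsTree c I a m) (k : ℕ) :
    branch (fun i ↦ ω i + 1) k ∈ I (k + 1) :=
  h.branch_mem (fun i ↦ ⟨le_add_self, (ω i).2⟩) k

lemma isMillsSequence_coding (h : IsMillsTree c I a m) (hc : ∀ k ≥ 1, 0 < c k) :
    IsMillsSequence (cumProd c) fun k ↦ a (branch (fun i ↦ ω i + 1) k) :=
  h.isMillsSequence_branch hc fun k ↦ ⟨le_add_self, (ω k).2⟩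

lemma coding_le (h : IsMillsTree c I a m) (hc : ∀ k ≥ 1, 0 < c k) :
    coding c I a m ω ≤ ((a [1] : ℝ) + 1) ^ (c 1)⁻¹ :=
  cumProd_zero (c := c) ▸
    ((h.isMillsSequence_coding ω hc).millsConstant_mem_Icc (cumProd_pos hc) 0).2

lemma coding_mem (h : IsMillsTree c I a m) (hc : ∀ k ≥ 1, 0 < c k) {B : Set ℕ}
    (haB : ∀ k ≥ 1, ∀ j ∈ I k, a j ∈ B)
    (hω : coding c I a m ω ∉ range fun p : ℕ × ℕ ↦ (p.1 : ℝ) ^ (cumProd c p.2)⁻¹) :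
    coding c I a m ω ∈ Ico ((a [1] : ℝ) ^ (c 1)⁻¹) (((a [1] : ℝ) + 1) ^ (c 1)⁻¹) ∧
      ∀ k, ⌊coding c I a m ω ^ cumProd c k⌋₊ ∈ B := by
  have hb := h.isMillsSequence_coding ω hc
  have hne (k : ℕ) : coding c I a m ω ^ cumProd c k ≠ a (branch (fun i ↦ ω i + 1) k) + 1 := by
    refine fun heq ↦ hω ⟨(a (branch (fun i ↦ ω i + 1) k) + 1, k), ?_⟩
    push_cast
    rw [← heq]
    exact rpow_rpow_inv (hb.millsConstant_nonneg (cumProd_pos hc)) (cumProd_pos hc k).ne'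
  refine ⟨cumProd_zero (c := c) ▸ hb.millsConstant_mem_Ico (cumProd_pos hc) (hne 0), fun k ↦ ?_⟩
  rw [coding, hb.floor_millsConstant_rpow (cumProd_pos hc) (hne k)]
  exact haB _ (by lia) _ (h.branch_coding_mem ω k)

lemma one_le_mul_rpow_mul_dist_coding (h : IsMillsTree c I a m) (hc : ∀ k ≥ 1, 0 < c k) {k : ℕ}
    (hk : 1 ≤ cumProd c k) (hω : ω' ∉ PiNat.cylinder ω k) :
    1 ≤ cumProd c k * (((a [1] : ℝ) + 1) ^ (c 1)⁻¹) ^ cumProd c k *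
      dist (coding c I a m ω) (coding c I a m ω') := by
  have hne : branch (fun i ↦ (ω i : ℕ) + 1) k ≠ branch (fun i ↦ (ω' i : ℕ) + 1) k :=
    fun heq ↦ hω fun i hi ↦ Fin.ext (Nat.succ_injective (branch_eq_iff.1 heq i hi)).symm
  exact (h.isMillsSequence_coding ω hc).one_le_mul_rpow_mul_dist (h.isMillsSequence_coding ω' hc)
    (cumProd_pos hc) hk
    (h.two_le_abs_sub (k + 2) (by lia) _ (h.branch_coding_mem ω k) _ (h.branch_coding_mem ω' k)
      hne) (h.coding_le ω hc) (h.coding_le ω' hc)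

lemma eventually_exp_le_dist_coding (h : IsMillsTree c I a m) (hc : ∀ k ≥ 1, 0 < c k)
    (hlim : Tendsto (cumProd c) atTop atTop) {ν : ℝ} (hν : log (a [1] + 1) / c 1 < ν) :
    ∀ᶠ k in atTop, ∀ ω ω', ω' ∉ PiNat.cylinder ω k →
      exp (-(ν * cumProd c k)) ≤ dist (coding c I a m ω) (coding c I a m ω') := by
  have hlog : log (((a [1] : ℝ) + 1) ^ (c 1)⁻¹) < ν := by
    rwa [log_rpow (by positivity), inv_mul_eq_div]
  filter_upwards [hlim.eventually (eventually_mul_rpow_le_exp (by positivity) hlog),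
    hlim.eventually_ge_atTop 1] with k hk hk₁ ω ω' hω
  rw [exp_neg, inv_le_iff_one_le_mul₀' (exp_pos _)]
  exact (h.one_le_mul_rpow_mul_dist_coding ω ω' hc hk₁ hω).trans
    (mul_le_mul_of_nonneg_right hk dist_nonneg)

lemma ofReal_le_dimH_range_coding (h : IsMillsTree c I a m) {R : ℝ}
    (hc : ∀ k ≥ 1, 1 ≤ c k ∧ c k ≤ R) (hlim : Tendsto (cumProd c) atTop atTop) (ha : 1 < a [1])
    (hm₀ : ∀ k ≥ 1, ∀ j ∈ I k, 0 < m j)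
    (hm : ∀ β ∈ Ioo (0 : ℝ) 1, ∀ᶠ k in atTop, ∀ j ∈ I k,
      (a j : ℝ) ^ (β * (c (k + 1) - 1)) ≤ m j) :
    ENNReal.ofReal (log (a [1]) / (log (a [1]) + R * (log (a [1] + 1) - log (a [1])))) ≤
      dimH (range (coding c I a m)) := by
  have hc₀ (k : ℕ) (hk : k ≥ 1) : 0 < c k := zero_lt_one.trans_le (hc k hk).1
  have hc₁ : 0 < c 1 := hc₀ 1 le_rfl
  have hR : 0 ≤ R := hc₁.le.trans (hc 1 le_rfl).2
  have hstep (k : ℕ) : cumProd c (k + 1) ≤ R * cumProd c k := by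
    rw [cumProd_succ, mul_comm]
    exact mul_le_mul_of_nonneg_right (hc _ (by lia)).2 (cumProd_pos hc₀ k).le
  have hlog : 0 < log (a [1]) := log_pos (by exact_mod_cast ha)
  have hlog_le : log (a [1]) ≤ log (a [1] + 1) := log_le_log (by positivity) (by linarith)
  have (k : ℕ) : Nonempty (Fin (minChildCount I m k)) := ⟨⟨0, h.minChildCount_pos hm₀ k⟩⟩
  calc ENNReal.ofReal (log (a [1]) / (log (a [1]) + R * (log (a [1] + 1) - log (a [1]))))
      = ENNReal.ofReal (log (a [1]) / c 1 / (log (a [1]) / c 1 +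
          R * (log (a [1] + 1) / c 1 - log (a [1]) / c 1))) := by
        congr 1
        field_simp
    _ ≤ dimH (range (coding c I a m)) :=
        ofReal_div_le_dimH_range_of_exp_separated measurable_coding hlim hR hstep
          (div_pos hlog hc₁) (by gcongr)
          (fun β hβ ↦ by simpa using
            h.eventually_exp_le_minChildCount (fun k hk ↦ (hc k hk).1) ha hm₀ hm hβ)
          (fun ν hν ↦ h.eventually_exp_le_dist_coding hc₀ hlim hν)

end Coding

theorem ofReal_le_dimH (h : IsMillsTree c I a m) {R : ℝ} {C : ℕ → ℝ}
    (hc : ∀ k ≥ 1, 1 ≤ c k ∧ c k ≤ R) (hC : ∀ k ≥ 1, C k = ∏ i ∈ Finset.Icc 1 k, c i)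
    (hlim : Tendsto C atTop atTop) {B : Set ℕ}
    (haB : ∀ k ≥ 1, ∀ j ∈ I k, a j ∈ B) (ha : 1 < a [1])
    (hm₀ : ∀ k ≥ 1, ∀ j ∈ I k, 0 < m j)
    (hm : ∀ β ∈ Ioo (0 : ℝ) 1, ∀ᶠ k in atTop, ∀ j ∈ I k,
      (a j : ℝ) ^ (β * (c (k + 1) - 1)) ≤ m j) :
    ENNReal.ofReal (log (a [1]) / (log (a [1]) + R * (log (a [1] + 1) - log (a [1])))) ≤
      dimH {x : ℝ | x ∈ Ico ((a [1] : ℝ) ^ (1 / c 1)) (((a [1] : ℝ) + 1) ^ (1 / c 1)) ∧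
        ∀ k ≥ 1, ⌊x ^ C k⌋₊ ∈ B} := by
  set S := {x : ℝ | x ∈ Ico ((a [1] : ℝ) ^ (1 / c 1)) (((a [1] : ℝ) + 1) ^ (1 / c 1)) ∧
    ∀ k ≥ 1, ⌊x ^ C k⌋₊ ∈ B}
  have hc₀ (k : ℕ) (hk : k ≥ 1) : 0 < c k := zero_lt_one.trans_le (hc k hk).1
  have hC' (k : ℕ) : C (k + 1) = cumProd c k := hC _ k.succ_pos
  have hlim' : Tendsto (cumProd c) atTop atTop := ((tendsto_add_atTop_iff_nat 1).2 hlim).congr hC'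
  have hsub : range (coding c I a m) ⊆
      S ∪ range fun p : ℕ × ℕ ↦ (p.1 : ℝ) ^ (cumProd c p.2)⁻¹ := by
    refine range_subset_iff.2 fun ω ↦ or_iff_not_imp_right.2 fun hω ↦ ?_
    obtain ⟨hmem, hfloor⟩ := h.coding_mem ω hc₀ haB hω
    refine ⟨by simpa only [one_div] using hmem, fun k hk ↦ ?_⟩
    obtain ⟨k, rfl⟩ := Nat.exists_eq_add_of_le' hk
    exact hC' k ▸ hfloor k
  calc ENNReal.ofReal (log (a [1]) / (log (a [1]) + R * (log (a [1] + 1) - log (a [1]))))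
      ≤ dimH (range (coding c I a m)) :=
        h.ofReal_le_dimH_range_coding hc hlim' ha hm₀ hm
    _ ≤ dimH (S ∪ range fun p : ℕ × ℕ ↦ (p.1 : ℝ) ^ (cumProd c p.2)⁻¹) := dimH_mono hsub
    _ = dimH S := by rw [dimH_union, dimH_countable (countable_range _), max_eq_left zero_le]

end IsMillsTree

lemma one_div_one_add_div_le {R x : ℝ} (hR : 0 ≤ R) (hx : 1 < x) :
    1 / (1 + R / (x * log x)) ≤ log x / (log x + R * (log (x + 1) - log x)) := by
  have hx₀ : 0 < x := zero_lt_one.trans hx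
  have hlog := log_pos hx
  have hdiff : log (x + 1) - log x ≤ x⁻¹ := by
    rw [← log_div (by positivity) hx₀.ne', add_div, div_self hx₀.ne', one_div]
    linarith [log_le_sub_one_of_pos (show 0 < 1 + x⁻¹ by positivity)]
  have hdiff₀ : 0 ≤ log (x + 1) - log x := sub_nonneg.2 (log_le_log hx₀ (by linarith))
  calc 1 / (1 + R / (x * log x)) = log x / (log x + R * x⁻¹) := by field_simp
    _ ≤ log x / (log x + R * (log (x + 1) - log x)) := by gcongr

theorem hausdorff_dim_lower_bound_general_construction_general {R θ L Q : ℝ} (hθ : 0 < θ)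
    (hQ : 0 < Q) {c C : ℕ → ℝ} (hc : ∀ k ≥ 1, 1 + θ ≤ c k ∧ c k ≤ R)
    (hC : ∀ k ≥ 1, C k = ∏ i ∈ Finset.Icc 1 k, c i) {B : Set ℕ} {I : ℕ → Finset (List ℕ)}
    {a m : List ℕ → ℕ} (haB : ∀ k ≥ 1, ∀ j ∈ I k, a j ∈ B) (h : IsMillsTree c I a m)
    (hm : ∀ k, 2 ≤ k → ∀ j ∈ I (k - 1),
      Q * (a j : ℝ) ^ (c k - 1) * (c k * log (a j)) ^ (-L) ≤ (m j : ℝ))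
    (ha : 1 < a [1]) :
    ENNReal.ofReal (1 / (1 + R / (a [1] * log (a [1])))) ≤
      dimH {x : ℝ | x ∈ Ico ((a [1] : ℝ) ^ (1 / c 1)) (((a [1] : ℝ) + 1) ^ (1 / c 1)) ∧
        ∀ k ≥ 1, ⌊x ^ C k⌋₊ ∈ B} := by
  have hc₁ (k : ℕ) (hk : k ≥ 1) : 1 ≤ c k := by linarith [hc k hk]
  have hc₀ (k : ℕ) (hk : k ≥ 1) : 0 < c k := zero_lt_one.trans_le (hc₁ k hk)
  have hR : 0 ≤ R := (hc₀ 1 le_rfl).le.trans (hc 1 le_rfl).2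
  have hlim : Tendsto C atTop atTop := (tendsto_add_atTop_iff_nat 1).1 <|
    (tendsto_cumProd (lt_add_of_pos_right 1 hθ) fun k hk ↦ (hc k hk).1).congr
      fun k ↦ (hC _ k.succ_pos).symm
  calc ENNReal.ofReal (1 / (1 + R / (a [1] * log (a [1]))))
      ≤ ENNReal.ofReal (log (a [1]) / (log (a [1]) + R * (log (a [1] + 1) - log (a [1])))) :=
        ENNReal.ofReal_le_ofReal (one_div_one_add_div_le hR (Nat.one_lt_cast.2 ha))
    _ ≤ _ := h.ofReal_le_dimH (fun k hk ↦ ⟨hc₁ k hk, (hc k hk).2⟩) hC hlim haB ha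
        (h.childCount_pos hc₀ ha hQ hm)
        fun β hβ ↦ h.eventually_rpow_le_childCount hθ hc ha hQ hm hβ.2

/-- **Proposition 5.1.** Tuples in `ℕ^k` are encoded as lists of length `k`; `(j, i)` is
`j ++ [i]`, and the one-entry tuple `(1)` is `[1]`.

For all `R, θ, L, Q > 0` there is `M₁ = M₁(R, θ, L, Q) > 0` with: for every sequence `(c_k)`
with `1 + θ ≤ c_k ≤ R` (and `C_k = c_1 ⋯ c_k`), any `B ⊆ ℕ`, and any `I_k ⊆ ℕ^k`,
`a : ⋃_k I_k → B`, `m : ⋃_k I_k → ℕ` satisfying (C1)–(C4) with `a((1)) ≥ M₁`, one has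
`dimH {A ∈ [a((1))^{1/c₁}, (a((1))+1)^{1/c₁}) : ⌊A^{C_k}⌋ ∈ B for all k ≥ 1}
  ≥ 1/(1 + R/(a((1)) log a((1))))`. -/
theorem hausdorff_dim_lower_bound_general_construction
    (R θ L Q : ℝ) (hR : 0 < R) (hθ : 0 < θ) (hL : 0 < L) (hQ : 0 < Q) :
    ∃ M₁ : ℝ, 0 < M₁ ∧
      ∀ c : ℕ → ℝ, (∀ k ≥ 1, 1 + θ ≤ c k ∧ c k ≤ R) →
      ∀ C : ℕ → ℝ, (∀ k ≥ 1, C k = ∏ i ∈ Finset.Icc 1 k, c i) →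
      ∀ (B : Set ℕ) (I : ℕ → Finset (List ℕ)) (a m : List ℕ → ℕ),
        -- index sets live in ℕ^k
        (∀ k ≥ 1, ∀ j ∈ I k, j.length = k) →
        -- `a` takes values in `B`
        (∀ k ≥ 1, ∀ j ∈ I k, a j ∈ B) →
        -- (C1)
        I 1 = {[1]} →
        (∀ k, 2 ≤ k → ∀ l : List ℕ,
          l ∈ I k ↔ ∃ j ∈ I (k - 1), ∃ i : ℕ, 1 ≤ i ∧ i ≤ m j ∧ l = j ++ [i]) →
        -- (C2)
        (∀ k, 2 ≤ k → ∀ j ∈ I (k - 1),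
          ((a j : ℝ) ^ c k ≤ (a (j ++ [1]) : ℝ)) ∧
          (∀ i : ℕ, 1 ≤ i → i < m j → a (j ++ [i]) < a (j ++ [i + 1])) ∧
          ((a (j ++ [m j]) : ℝ) ≤ ((a j : ℝ) + 1) ^ c k - 1)) →
        -- (C3)
        (∀ k, 2 ≤ k → ∀ j ∈ I (k - 1), ∀ j' ∈ I (k - 1), j ≠ j' →
          2 ≤ |(a j : ℝ) - (a j' : ℝ)|) →
        -- (C4)
        (∀ k, 2 ≤ k → ∀ j ∈ I (k - 1),
          Q * (a j : ℝ) ^ (c k - 1) * (c k * Real.log (a j)) ^ (-L) ≤ (m j : ℝ)) →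
        M₁ ≤ (a [1] : ℝ) →
        ENNReal.ofReal (1 / (1 + R / ((a [1] : ℝ) * Real.log (a [1])))) ≤
          dimH {A : ℝ |
            A ∈ Set.Ico ((a [1] : ℝ) ^ (1 / c 1)) (((a [1] : ℝ) + 1) ^ (1 / c 1)) ∧
            ∀ k ≥ 1, ⌊A ^ C k⌋₊ ∈ B} := by
  exact ⟨2, two_pos, fun c hc C hC B I a m _ haB hI₁ hI hC2 hC3 hC4 ha ↦
    hausdorff_dim_lower_bound_general_construction_general hθ hQ hc hC haB ⟨hI₁, hI, hC2, hC3⟩ hC4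
      (Nat.succ_le_iff.1 (by exact_mod_cast ha))⟩
end

section
/- Let R, θ, L, Q > 0, let (c_k)_{k≥1} be a real sequence with 1 + θ ≤ c_k ≤ R for all k, set C_k = c_1 ⋯ c_k, let B ⊆ ℕ, and suppose there exist finite index sets I_k ⊆ ℕ^k (k = 1, 2, …), a function a defined on ∪_{k≥1} I_k taking values in B with a((1)) ≥ 2, and a function m : ∪_{k≥1} I_k → ℕ satisfying (C1)–(C4). Then for every k ≥ 2 and any two distinct tuples j, j' ∈ I_k with a(j) < a(j'), one has a(j')^{1/C_k} − (a(j)+1)^{1/C_k} ≥ (1/C_k) · (a((1))+1)^{(1 − C_k)/C_1}; that is, the k-th level intervals [a(j)^{1/C_k}, (a(j)+1)^{1/C_k}) are separated by gaps of at least (1/C_k)(a((1))+1)^{(1−C_k)/C_1}. -/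
open Real Set

/-!
Two values on level `k` differ by at least `2`, so `a(j) + 1` and `a(j')` differ by at least `1`,
and by concavity of `t ↦ t ^ (1 / C_k)` their images differ by at least the slope of this function
at any point `z ≥ a(j')`. Iterating the upper bound in (C2) down to the root shows that
`z = (a((1)) + 1) ^ (C_k / C_1)` is such a point, and the slope there is the asserted gap.
-/

lemma mul_rpow_sub_one_mul_le_rpow_sub_rpow {p x y : ℝ} (hp0 : 0 ≤ p) (hp1 : p ≤ 1)
    (hx : 0 ≤ x) (hxy : x < y) : p * y ^ (p - 1) * (y - x) ≤ y ^ p - x ^ p := by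
  have hy : 0 < y := hx.trans_lt hxy
  have hslope := (Real.concaveOn_rpow hp0 hp1).le_slope_of_hasDerivAt hx hy.le hxy
    (Real.hasDerivAt_rpow_const (Or.inl hy.ne'))
  rwa [slope_def_field, le_div_iff₀ (sub_pos.2 hxy)] at hslope

lemma mul_rpow_sub_one_le_rpow_sub_rpow {p x y z : ℝ} (hp0 : 0 ≤ p) (hp1 : p ≤ 1)
    (hx : 0 ≤ x) (hxy : x + 1 ≤ y) (hyz : y ≤ z) : p * z ^ (p - 1) ≤ y ^ p - x ^ p := by
  have hy : 0 < y := by linarith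
  calc p * z ^ (p - 1) ≤ p * y ^ (p - 1) :=
        mul_le_mul_of_nonneg_left (Real.rpow_le_rpow_of_nonpos hy hyz (sub_nonpos.2 hp1)) hp0
    _ ≤ p * y ^ (p - 1) * (y - x) := le_mul_of_one_le_right (by positivity) (by linarith)
    _ ≤ y ^ p - x ^ p := mul_rpow_sub_one_mul_le_rpow_sub_rpow hp0 hp1 hx (by linarith)

lemma le_rpow_prod_of_exists_le_rpow {ι : Type*} {c : ℕ → ℝ} (hc : ∀ k ≥ 1, 0 ≤ c (k + 1))
    {I : ℕ → Set ι} {u : ι → ℝ} (hu : ∀ k ≥ 1, ∀ j ∈ I k, 0 ≤ u j)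
    {b : ℝ} (hb : 0 ≤ b) (hbase : ∀ j ∈ I 1, u j ≤ b)
    (hstep : ∀ k ≥ 1, ∀ l ∈ I (k + 1), ∃ j ∈ I k, u l ≤ u j ^ c (k + 1))
    {k : ℕ} (hk : 1 ≤ k) {j : ι} (hj : j ∈ I k) : u j ≤ b ^ ∏ i ∈ Finset.Ioc 1 k, c i := by
  induction k, hk using Nat.le_induction generalizing j with
  | base => simpa using hbase j hj
  | succ k hk ih =>
    obtain ⟨i, hi, hji⟩ := hstep k hk j hj
    calc u j ≤ u i ^ c (k + 1) := hji
      _ ≤ (b ^ ∏ i ∈ Finset.Ioc 1 k, c i) ^ c (k + 1) :=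
        Real.rpow_le_rpow (hu k hk i hi) (ih hi) (hc k hk)
      _ = b ^ ∏ i ∈ Finset.Ioc 1 (k + 1), c i := by
        rw [← Real.rpow_mul hb, Finset.prod_Ioc_succ_top hk]

lemma exists_add_one_le_rpow_of_mem_children {S : Set (List ℕ)} {a : List ℕ → ℝ}
    {m : List ℕ → ℕ} {p : ℝ}
    (hmono : ∀ j ∈ S, ∀ i, 1 ≤ i → i < m j → a (j ++ [i]) ≤ a (j ++ [i + 1]))
    (hlast : ∀ j ∈ S, a (j ++ [m j]) ≤ (a j + 1) ^ p - 1)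
    {l : List ℕ} (hl : ∃ j ∈ S, ∃ i, 1 ≤ i ∧ i ≤ m j ∧ l = j ++ [i]) :
    ∃ j ∈ S, a l + 1 ≤ (a j + 1) ^ p := by
  obtain ⟨j, hj, i, hi, him, rfl⟩ := hl
  have hmonoOn : MonotoneOn (fun i ↦ a (j ++ [i])) (Icc 1 (m j)) :=
    monotoneOn_of_le_add_one ordConnected_Icc fun i _ hi hi' ↦ hmono j hj i hi.1 hi'.2
  have hle : a (j ++ [i]) ≤ a (j ++ [m j]) :=
    hmonoOn ⟨hi, him⟩ (right_mem_Icc.2 (hi.trans him)) him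
  exact ⟨j, hj, by linarith [hlast j hj]⟩

theorem level_intervals_gap_lower_bound_general {ι : Type*}
    {c : ℕ → ℝ} (hc : ∀ k ≥ 1, 1 ≤ c k)
    {C : ℕ → ℝ} (hC : ∀ k ≥ 1, C k = ∏ i ∈ Finset.Icc 1 k, c i)
    {I : ℕ → Set ι} {r : ι} (hI1 : I 1 = {r})
    {a : ι → ℝ} (ha : ∀ k ≥ 1, ∀ j ∈ I k, 0 ≤ a j)
    (hparent : ∀ k ≥ 1, ∀ l ∈ I (k + 1), ∃ j ∈ I k, a l + 1 ≤ (a j + 1) ^ c (k + 1))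
    {k : ℕ} (hk : 1 ≤ k) {j j' : ι} (hj : j ∈ I k) (hj' : j' ∈ I k)
    (hsep : 2 ≤ |a j - a j'|) (hlt : a j < a j') :
    (1 / C k) * (a r + 1) ^ ((1 - C k) / C 1) ≤ a j' ^ (1 / C k) - (a j + 1) ^ (1 / C k) := by
  have hCk : 1 ≤ C k :=
    hC k hk ▸ Finset.one_le_prod fun i hi ↦ hc i (Finset.mem_Icc.1 hi).1
  have hC1 : 1 ≤ C 1 := by simpa [hC 1 le_rfl] using hc 1 le_rfl
  have hfactor : C k = C 1 * ∏ i ∈ Finset.Ioc 1 k, c i := by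
    rw [hC k hk, hC 1 le_rfl, Finset.Icc_self, Finset.prod_singleton,
      Finset.mul_prod_Ioc_eq_prod_Icc hk]
  have hroot : 0 ≤ a r + 1 := by linarith [ha 1 le_rfl r (hI1 ▸ mem_singleton r)]
  have hgrowth : a j' + 1 ≤ (a r + 1) ^ ∏ i ∈ Finset.Ioc 1 k, c i :=
    le_rpow_prod_of_exists_le_rpow (fun i _ ↦ zero_le_one.trans (hc (i + 1) (by lia)))
      (fun i hi l hl ↦ by linarith [ha i hi l hl]) hroot (by simp [hI1]) hparent hk hj'
  have hexp : (1 - C k) / C 1 = (∏ i ∈ Finset.Ioc 1 k, c i) * (1 / C k - 1) := by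
    rw [eq_div_of_mul_eq (by positivity) ((mul_comm _ _).trans hfactor.symm)]
    field_simp
  rw [hexp, Real.rpow_mul hroot]
  rw [abs_of_neg (sub_neg.2 hlt)] at hsep
  exact mul_rpow_sub_one_le_rpow_sub_rpow (by positivity) ((div_le_one (by positivity)).2 hCk)
    (by linarith [ha k hk j hj]) (by linarith) (by linarith)

/-- **Lemma 5.3 (gaps between level intervals).** Tuples in `ℕ^k` are encoded as lists of
length `k`; `(j, i)` is `j ++ [i]`, and the one-entry tuple `(1)` is `[1]`.

Under (C1)–(C4) with `1 + θ ≤ c_k ≤ R` and `a((1)) ≥ 2`, for every `k ≥ 2` and distinct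
`j, j' ∈ I_k` with `a(j) < a(j')`, one has
`a(j')^{1/C_k} - (a(j)+1)^{1/C_k} ≥ (1/C_k) (a((1))+1)^{(1 - C_k)/C_1}`. -/
theorem level_intervals_gap_lower_bound
    (R θ L Q : ℝ) (hR : 0 < R) (hθ : 0 < θ) (hL : 0 < L) (hQ : 0 < Q)
    (c : ℕ → ℝ) (hc : ∀ k ≥ 1, 1 + θ ≤ c k ∧ c k ≤ R)
    (C : ℕ → ℝ) (hC : ∀ k ≥ 1, C k = ∏ i ∈ Finset.Icc 1 k, c i)
    (B : Set ℕ) (I : ℕ → Finset (List ℕ)) (a m : List ℕ → ℕ)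
    -- index sets live in ℕ^k
    (hlen : ∀ k ≥ 1, ∀ j ∈ I k, j.length = k)
    -- `a` takes values in `B`
    (haB : ∀ k ≥ 1, ∀ j ∈ I k, a j ∈ B)
    -- `a((1)) ≥ 2`
    (ha1 : 2 ≤ a [1])
    -- (C1)
    (hI1 : I 1 = {[1]})
    (hIk : ∀ k, 2 ≤ k → ∀ l : List ℕ,
      l ∈ I k ↔ ∃ j ∈ I (k - 1), ∃ i : ℕ, 1 ≤ i ∧ i ≤ m j ∧ l = j ++ [i])
    -- (C2)
    (hC2 : ∀ k, 2 ≤ k → ∀ j ∈ I (k - 1),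
      ((a j : ℝ) ^ c k ≤ (a (j ++ [1]) : ℝ)) ∧
      (∀ i : ℕ, 1 ≤ i → i < m j → a (j ++ [i]) < a (j ++ [i + 1])) ∧
      ((a (j ++ [m j]) : ℝ) ≤ ((a j : ℝ) + 1) ^ c k - 1))
    -- (C3)
    (hC3 : ∀ k, 2 ≤ k → ∀ j ∈ I (k - 1), ∀ j' ∈ I (k - 1), j ≠ j' →
      2 ≤ |(a j : ℝ) - (a j' : ℝ)|)
    -- (C4)
    (hC4 : ∀ k, 2 ≤ k → ∀ j ∈ I (k - 1),
      Q * (a j : ℝ) ^ (c k - 1) * (c k * Real.log (a j)) ^ (-L) ≤ (m j : ℝ)) :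
    ∀ k, 2 ≤ k → ∀ j ∈ I k, ∀ j' ∈ I k, j ≠ j' → a j < a j' →
      (1 / C k) * ((a [1] : ℝ) + 1) ^ ((1 - C k) / C 1) ≤
        (a j' : ℝ) ^ (1 / C k) - ((a j : ℝ) + 1) ^ (1 / C k) := by
  have hparent : ∀ k ≥ 1, ∀ l ∈ I (k + 1), ∃ j ∈ I k,
      (a l : ℝ) + 1 ≤ ((a j : ℝ) + 1) ^ c (k + 1) := fun k hk l hl ↦
    exists_add_one_le_rpow_of_mem_children (S := I k) (a := fun j ↦ (a j : ℝ))
      (fun j hj i hi him ↦ mod_cast ((hC2 (k + 1) (by lia) j hj).2.1 i hi him).le)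
      (fun j hj ↦ (hC2 (k + 1) (by lia) j hj).2.2) ((hIk (k + 1) (by lia) l).1 hl)
  exact fun k hk j hj j' hj' hne hlt ↦
    level_intervals_gap_lower_bound_general (I := fun i ↦ I i) (a := fun l ↦ (a l : ℝ))
      (fun i hi ↦ by linarith [(hc i hi).1]) hC (by simp [hI1]) (fun _ _ _ _ ↦ Nat.cast_nonneg _)
      hparent (by lia) hj hj' (hC3 (k + 1) (by lia) j hj j' hj' hne) (mod_cast hlt)
end

section
/- For all R, θ, L, Q > 0 there exists M_1 = M_1(R, θ, L, Q) > 0 with the following property. Let (c_k)_{k≥1} be a real sequence with 1 + θ ≤ c_k ≤ R for all k, set C_k = c_1 ⋯ c_k, let B ⊆ ℕ, and suppose there exist finite index sets I_k ⊆ ℕ^k (k = 1, 2, …), a function a defined on ∪_{k≥1} I_k taking values in B, and a function m : ∪_{k≥1} I_k → ℕ satisfying (C1)–(C4) and a((1)) ≥ M_1. Then for every k ≥ 2 and every j ∈ I_{k−1}, m(j) ≥ Q · a((1))^{(C_k − C_{k−1})/C_1} / (C_k log a((1)))^L. -/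
/-!
The quantity in (C4) is, up to the factor `Q`, the value at `a(j)` of
`x ↦ x ^ (c_k - 1) * (c_k * log x) ^ (-L)`, which is increasing on `[exp (L / (c_k - 1)), ∞)`, hence
on `[exp (L / θ), ∞)`; so `M₁ = exp (L / θ)` works. Iterating the lower bound in (C2) from the root
gives `a(j) ≥ a((1)) ^ P` for `j ∈ I_{k-1}`, where `P = c_2 ⋯ c_{k-1} = C_{k-1} / C_1`. By
monotonicity `a(j)` may be replaced by `a((1)) ^ P` in (C4), and it remains to note that
`(c_k - 1) P = (C_k - C_{k-1}) / C_1` and `c_k P = C_k / C_1 ≤ C_k`.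
-/

open Real Set

theorem monotoneOn_rpow_mul_log_rpow_neg {L d K : ℝ} (hL : 0 < L) (hd : 0 < d) (hK : 0 ≤ K) :
    MonotoneOn (fun x ↦ x ^ d * (K * log x) ^ (-L)) (Ici (exp (L / d))) := by
  have one_lt {x : ℝ} (hx : x ∈ Ici (exp (L / d))) : 1 < x :=
    (one_lt_exp_iff.2 (div_pos hL hd)).trans_le hx
  have factor {x : ℝ} (hx : x ∈ Ici (exp (L / d))) :
      x ^ d * (K * log x) ^ (-L) = K ^ (-L) * (log x / x ^ (d / L)) ^ (-L) := by
    have hx₀ : 0 < x := one_pos.trans (one_lt hx)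
    have hlog : 0 < log x := log_pos (one_lt hx)
    rw [mul_rpow hK hlog.le, div_rpow hlog.le (by positivity), ← rpow_mul hx₀.le, mul_neg,
      div_mul_cancel₀ d hL.ne', rpow_neg hx₀.le, div_inv_eq_mul]
    ring
  intro x hx y hy hxy
  have hratio : log y / y ^ (d / L) ≤ log x / x ^ (d / L) :=
    log_div_self_rpow_antitoneOn (div_pos hd hL) (by rwa [inv_div]) (by rwa [inv_div]) hxy
  have hy_pos : 0 < log y / y ^ (d / L) :=
    div_pos (log_pos (one_lt hy)) (rpow_pos_of_pos (one_pos.trans (one_lt hy)) _)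
  calc x ^ d * (K * log x) ^ (-L)
      = K ^ (-L) * (log x / x ^ (d / L)) ^ (-L) := factor hx
    _ ≤ K ^ (-L) * (log y / y ^ (d / L)) ^ (-L) :=
        mul_le_mul_of_nonneg_left (rpow_le_rpow_of_nonpos hy_pos hratio (neg_nonpos.2 hL.le))
          (rpow_nonneg hK _)
    _ = y ^ d * (K * log y) ^ (-L) := (factor hy).symm

theorem rpow_mul_log_rpow_neg_le_of_rpow_le {L d c P K x y : ℝ} (hL : 0 < L) (hd : 0 < d)
    (hc : 0 < c) (hP : 1 ≤ P) (hK : c * P ≤ K) (hx : exp (L / d) ≤ x) (hxy : x ^ P ≤ y) :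
    x ^ (P * d) * (K * log x) ^ (-L) ≤ y ^ d * (c * log y) ^ (-L) := by
  have hx₁ : 1 < x := (one_lt_exp_iff.2 (div_pos hL hd)).trans_le hx
  have hx₀ : 0 < x := one_pos.trans hx₁
  have hlog : 0 < log x := log_pos hx₁
  have hxP : exp (L / d) ≤ x ^ P := hx.trans (self_le_rpow_of_one_le hx₁.le hP)
  calc x ^ (P * d) * (K * log x) ^ (-L)
      ≤ x ^ (P * d) * (c * P * log x) ^ (-L) := by
        gcongr ?_ * ?_
        exact rpow_le_rpow_of_nonpos (by positivity) (by gcongr) (neg_nonpos.2 hL.le)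
    _ = (x ^ P) ^ d * (c * log (x ^ P)) ^ (-L) := by
        rw [rpow_mul hx₀.le, log_rpow hx₀, mul_assoc]
    _ ≤ y ^ d * (c * log y) ^ (-L) :=
        monotoneOn_rpow_mul_log_rpow_neg hL hd hc.le hxP (hxP.trans hxy) hxy

theorem prod_Icc_succ_sub_prod_Icc_div {K : Type*} [Field K] {c : ℕ → K} {b n : ℕ} (hbn : b ≤ n)
    (hb : c b ≠ 0) :
    (∏ i ∈ Finset.Icc b (n + 1), c i - ∏ i ∈ Finset.Icc b n, c i) / c b =
      (∏ i ∈ Finset.Ioc b n, c i) * (c (n + 1) - 1) := by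
  rw [Finset.prod_Icc_succ_top (by lia), ← Finset.mul_prod_Ioc_eq_prod_Icc hbn]
  field_simp

theorem mul_prod_Ioc_le_prod_Icc_succ {K : Type*} [CommSemiring K] [PartialOrder K]
    [IsOrderedRing K] {c : ℕ → K} {b n : ℕ} (hbn : b ≤ n) (hb : 1 ≤ c b)
    (hc : ∀ i > b, 0 ≤ c i) :
    c (n + 1) * ∏ i ∈ Finset.Ioc b n, c i ≤ ∏ i ∈ Finset.Icc b (n + 1), c i := by
  have hprod : 0 ≤ ∏ i ∈ Finset.Ioc b (n + 1), c i :=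
    Finset.prod_nonneg fun i hi ↦ hc i (Finset.mem_Ioc.1 hi).1
  calc c (n + 1) * ∏ i ∈ Finset.Ioc b n, c i
      = ∏ i ∈ Finset.Ioc b (n + 1), c i := by rw [Finset.prod_Ioc_succ_top hbn, mul_comm]
    _ ≤ c b * ∏ i ∈ Finset.Ioc b (n + 1), c i :=
        le_mul_of_one_le_left hprod hb
    _ = ∏ i ∈ Finset.Icc b (n + 1), c i := Finset.mul_prod_Ioc_eq_prod_Icc (by lia)

theorem rpow_prod_le_of_exists_parent_rpow_le {α : Type*} {I : ℕ → Set α} {a : α → ℝ} {c : ℕ → ℝ}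
    {x : ℝ} (hx : 0 ≤ x) (hc : ∀ k ≥ 2, 0 ≤ c k) (hroot : ∀ j ∈ I 1, x ≤ a j)
    (hparent : ∀ k ≥ 2, ∀ l ∈ I k, ∃ j ∈ I (k - 1), a j ^ c k ≤ a l) :
    ∀ k ≥ 1, ∀ l ∈ I k, x ^ ∏ i ∈ Finset.Ioc 1 k, c i ≤ a l := by
  intro k hk
  induction k, hk using Nat.le_induction with
  | base => simpa using hroot
  | succ k hk ih =>
    intro l hl
    obtain ⟨j, hj, hjl⟩ := hparent (k + 1) (by lia) l hl
    calc x ^ ∏ i ∈ Finset.Ioc 1 (k + 1), c i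
        = (x ^ ∏ i ∈ Finset.Ioc 1 k, c i) ^ c (k + 1) := by
          rw [Finset.prod_Ioc_succ_top hk, rpow_mul hx]
      _ ≤ a j ^ c (k + 1) :=
          rpow_le_rpow (rpow_nonneg hx _) (ih j hj) (hc (k + 1) (by lia))
      _ ≤ a l := hjl

theorem exists_parent_rpow_le {c : ℕ → ℝ} {I : ℕ → Set (List ℕ)} {a : List ℕ → ℝ}
    {m : List ℕ → ℕ}
    (hI : ∀ k ≥ 2, ∀ l ∈ I k, ∃ j ∈ I (k - 1), ∃ i, 1 ≤ i ∧ i ≤ m j ∧ l = j ++ [i])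
    (hfirst : ∀ k ≥ 2, ∀ j ∈ I (k - 1), a j ^ c k ≤ a (j ++ [1]))
    (hnext : ∀ k ≥ 2, ∀ j ∈ I (k - 1), ∀ i, 1 ≤ i → i < m j → a (j ++ [i]) ≤ a (j ++ [i + 1])) :
    ∀ k ≥ 2, ∀ l ∈ I k, ∃ j ∈ I (k - 1), a j ^ c k ≤ a l := by
  intro k hk l hl
  obtain ⟨j, hj, i, hi, him, rfl⟩ := hI k hk l hl
  have hmono : MonotoneOn (fun i ↦ a (j ++ [i])) (Icc 1 (m j)) :=
    monotoneOn_of_le_add_one ordConnected_Icc fun i _ hi hi' ↦ hnext k hk j hj i hi.1 hi'.2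
  exact ⟨j, hj, (hfirst k hk j hj).trans (hmono ⟨le_rfl, hi.trans him⟩ ⟨hi, him⟩ hi)⟩

theorem level_intervals_count_lower_bound_general {α : Type*} {θ L Q x : ℝ} {c C : ℕ → ℝ}
    {I : ℕ → Set α} {a m : α → ℝ} (hθ : 0 < θ) (hL : 0 < L) (hQ : 0 ≤ Q)
    (hc : ∀ k ≥ 1, 1 + θ ≤ c k) (hC : ∀ k ≥ 1, C k = ∏ i ∈ Finset.Icc 1 k, c i)
    (hx : exp (L / θ) ≤ x) (hroot : ∀ j ∈ I 1, x ≤ a j)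
    (hparent : ∀ k ≥ 2, ∀ l ∈ I k, ∃ j ∈ I (k - 1), a j ^ c k ≤ a l)
    (hcount : ∀ k ≥ 2, ∀ j ∈ I (k - 1),
      Q * a j ^ (c k - 1) * (c k * log (a j)) ^ (-L) ≤ m j) :
    ∀ k ≥ 2, ∀ j ∈ I (k - 1),
      Q * x ^ ((C k - C (k - 1)) / C 1) / (C k * log x) ^ L ≤ m j := by
  intro k hk j hj
  obtain ⟨n, hn, rfl⟩ : ∃ n ≥ 1, k = n + 1 := ⟨k - 1, by lia, by lia⟩
  have hm := hcount (n + 1) hk j hj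
  rw [Nat.add_sub_cancel] at hj ⊢
  rw [hC (n + 1) n.succ_pos, hC n hn, hC 1 le_rfl, Finset.Icc_self, Finset.prod_singleton]
  have hx₁ : 1 < x := (one_lt_exp_iff.2 (div_pos hL hθ)).trans_le hx
  have hc_one : ∀ k ≥ 1, 1 ≤ c k := fun k hk ↦ by linarith [hc k hk]
  have hc_pos : ∀ k ≥ 1, 0 < c k := fun k hk ↦ one_pos.trans_le (hc_one k hk)
  have hθc : θ ≤ c (n + 1) - 1 := by linarith [hc (n + 1) n.succ_pos]
  have hxc : exp (L / (c (n + 1) - 1)) ≤ x := le_trans (by gcongr) hx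
  have hP : 1 ≤ ∏ i ∈ Finset.Ioc 1 n, c i :=
    Finset.one_le_prod fun i hi ↦ hc_one i (Finset.mem_Ioc.1 hi).1.le
  have hcP : c (n + 1) * ∏ i ∈ Finset.Ioc 1 n, c i ≤ ∏ i ∈ Finset.Icc 1 (n + 1), c i :=
    mul_prod_Ioc_le_prod_Icc_succ hn (hc_one 1 le_rfl) fun i hi ↦ (hc_pos i hi.le).le
  have hxP : x ^ ∏ i ∈ Finset.Ioc 1 n, c i ≤ a j :=
    rpow_prod_le_of_exists_parent_rpow_le (one_pos.trans hx₁).le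
      (fun k hk ↦ (hc_pos k (one_le_two.trans hk)).le) hroot hparent n hn j hj
  have hbase : 0 ≤ (∏ i ∈ Finset.Icc 1 (n + 1), c i) * log x :=
    mul_nonneg (Finset.prod_nonneg fun i hi ↦ (hc_pos i (Finset.mem_Icc.1 hi).1).le)
      (log_pos hx₁).le
  rw [prod_Icc_succ_sub_prod_Icc_div hn (hc_pos 1 le_rfl).ne', div_eq_mul_inv, ← rpow_neg hbase,
    mul_assoc]
  calc Q * (x ^ ((∏ i ∈ Finset.Ioc 1 n, c i) * (c (n + 1) - 1)) *
          ((∏ i ∈ Finset.Icc 1 (n + 1), c i) * log x) ^ (-L))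
      ≤ Q * (a j ^ (c (n + 1) - 1) * (c (n + 1) * log (a j)) ^ (-L)) :=
        mul_le_mul_of_nonneg_left
          (rpow_mul_log_rpow_neg_le_of_rpow_le hL (hθ.trans_le hθc) (hc_pos _ n.succ_pos) hP
            hcP hxc hxP) hQ
    _ ≤ m j := by rwa [← mul_assoc]

/-- **Lemma 5.5 (number of level intervals).** Tuples in `ℕ^k` are encoded as lists of
length `k`; `(j, i)` is `j ++ [i]`, and the one-entry tuple `(1)` is `[1]`.

For all `R, θ, L, Q > 0` there is `M₁ = M₁(R, θ, L, Q) > 0` with: under (C1)–(C4) with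
`1 + θ ≤ c_k ≤ R` and `a((1)) ≥ M₁`, for every `k ≥ 2` and `j ∈ I_{k-1}` one has
`m(j) ≥ Q a((1))^{(C_k - C_{k-1})/C_1} / (C_k log a((1)))^L`. -/
theorem level_intervals_count_lower_bound
    (R θ L Q : ℝ) (hR : 0 < R) (hθ : 0 < θ) (hL : 0 < L) (hQ : 0 < Q) :
    ∃ M₁ : ℝ, 0 < M₁ ∧
      ∀ c : ℕ → ℝ, (∀ k ≥ 1, 1 + θ ≤ c k ∧ c k ≤ R) →
      ∀ C : ℕ → ℝ, (∀ k ≥ 1, C k = ∏ i ∈ Finset.Icc 1 k, c i) →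
      ∀ (B : Set ℕ) (I : ℕ → Finset (List ℕ)) (a m : List ℕ → ℕ),
        -- index sets live in ℕ^k
        (∀ k ≥ 1, ∀ j ∈ I k, j.length = k) →
        -- `a` takes values in `B`
        (∀ k ≥ 1, ∀ j ∈ I k, a j ∈ B) →
        -- (C1)
        I 1 = {[1]} →
        (∀ k, 2 ≤ k → ∀ l : List ℕ,
          l ∈ I k ↔ ∃ j ∈ I (k - 1), ∃ i : ℕ, 1 ≤ i ∧ i ≤ m j ∧ l = j ++ [i]) →
        -- (C2)
        (∀ k, 2 ≤ k → ∀ j ∈ I (k - 1),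
          ((a j : ℝ) ^ c k ≤ (a (j ++ [1]) : ℝ)) ∧
          (∀ i : ℕ, 1 ≤ i → i < m j → a (j ++ [i]) < a (j ++ [i + 1])) ∧
          ((a (j ++ [m j]) : ℝ) ≤ ((a j : ℝ) + 1) ^ c k - 1)) →
        -- (C3)
        (∀ k, 2 ≤ k → ∀ j ∈ I (k - 1), ∀ j' ∈ I (k - 1), j ≠ j' →
          2 ≤ |(a j : ℝ) - (a j' : ℝ)|) →
        -- (C4)
        (∀ k, 2 ≤ k → ∀ j ∈ I (k - 1),
          Q * (a j : ℝ) ^ (c k - 1) * (c k * Real.log (a j)) ^ (-L) ≤ (m j : ℝ)) →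
        M₁ ≤ (a [1] : ℝ) →
        ∀ k, 2 ≤ k → ∀ j ∈ I (k - 1),
          Q * (a [1] : ℝ) ^ ((C k - C (k - 1)) / C 1) / (C k * Real.log (a [1])) ^ L ≤
            (m j : ℝ) := by
  refine ⟨exp (L / θ), exp_pos _, fun c hc C hC _ I a m _ _ hI₁ hI hC₂ _ hC₄ hM ↦ ?_⟩
  have hroot : ∀ j ∈ I 1, (a [1] : ℝ) ≤ a j := by simp [hI₁]
  have hparent : ∀ k ≥ 2, ∀ l ∈ I k, ∃ j ∈ I (k - 1), (a j : ℝ) ^ c k ≤ a l :=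
    exists_parent_rpow_le (I := fun k ↦ I k) (fun k hk l ↦ (hI k hk l).1)
      (fun k hk j hj ↦ (hC₂ k hk j hj).1)
      fun k hk j hj i hi him ↦ Nat.cast_le.2 ((hC₂ k hk j hj).2.1 i hi him).le
  exact level_intervals_count_lower_bound_general (I := fun k ↦ I k) (a := fun j ↦ a j)
    (m := fun j ↦ m j) hθ hL hQ.le (fun k hk ↦ (hc k hk).1) hC hM hroot hparent hC₄
end
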